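/- arXiv:2404.05664 — 4 statements merged into one kernel-verified Lean document; each statement's English description precedes it below -/
import Mathlib

section
/- For all n ≥ 0 and 0 ≤ ℓ ≤ n, totalD(n,ℓ) = ℓ * C(2n, n-ℓ), where totalD(n,ℓ) is the sum over all ordered trees T with n edges and all nodes v at level ℓ in T of the number of nodes visited before v in the depth-first (pre-order) traversal of T. -/
open scoped Classical

/-- Height (number of up-steps minus number of down-steps) after the first `k` steps
of the word `w`, where `true` encodes an up-step and `false` a down-step. -/
def heightAt (n : ℕ) (w : Fin n → Bool) (k : ℕ) : ℤ :=
  ((Finset.univ.filter (fun i : Fin n => (i : ℕ) < k ∧ w i = true)).card : ℤ) -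
  ((Finset.univ.filter (fun i : Fin n => (i : ℕ) < k ∧ w i = false)).card : ℤ)

/-- `w` is a Dyck word of semilength `n` (the standard encoding of an ordered tree
with `n` edges via its pre-order traversal: `true` = step away from the root). -/
def IsDyck (n : ℕ) (w : Fin (2 * n) → Bool) : Prop :=
  (Finset.univ.filter (fun i : Fin (2 * n) => w i = true)).card = n ∧
  ∀ k : ℕ, k ≤ 2 * n → 0 ≤ heightAt (2 * n) w k

/-- The ordered trees with `n` edges, encoded as Dyck words. -/
noncomputable def dyckWords (n : ℕ) : Finset (Fin (2 * n) → Bool) :=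
  Finset.univ.filter (fun w => IsDyck n w)

/-- The nodes of the tree encoded by `w` : `none` is the root and `some i` for an
up-step `i` (`w i = true`) is the node this step leads to. -/
def isNode (n : ℕ) (w : Fin (2 * n) → Bool) : Option (Fin (2 * n)) → Prop
  | none => True
  | some i => w i = true

/-- The level (distance to the root) of a node. -/
def nodeLevel (n : ℕ) (w : Fin (2 * n) → Bool) : Option (Fin (2 * n)) → ℤ
  | none => 0
  | some i => heightAt (2 * n) w ((i : ℕ) + 1)

/-- The set of nodes at level `ℓ` of the tree encoded by `w`. -/
noncomputable def nodesAtLevel (n : ℕ) (w : Fin (2 * n) → Bool) (ℓ : ℕ) :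
    Finset (Option (Fin (2 * n))) :=
  Finset.univ.filter (fun v => isNode n w v ∧ nodeLevel n w v = (ℓ : ℤ))

/-- The number of nodes visited before the given node in the depth-first (pre-order)
traversal: the root comes first, and the non-root nodes appear in the order of their
up-steps in the Dyck word. -/
noncomputable def dfsScore (n : ℕ) (w : Fin (2 * n) → Bool) : Option (Fin (2 * n)) → ℕ
  | none => 0
  | some i => 1 +
      (Finset.univ.filter (fun j : Fin (2 * n) => (j : ℕ) < (i : ℕ) ∧ w j = true)).card

/-- The number of nodes visited before the given node in breadth-first search:
nodes are visited level by level, and from left to right within a level. -/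
noncomputable def bfsScore (n : ℕ) (w : Fin (2 * n) → Bool) : Option (Fin (2 * n)) → ℕ
  | none => 0
  | some i => 1 +
      (Finset.univ.filter (fun j : Fin (2 * n) =>
        w j = true ∧ (nodeLevel n w (some j) < nodeLevel n w (some i) ∨
          (nodeLevel n w (some j) = nodeLevel n w (some i) ∧ (j : ℕ) < (i : ℕ))))).card

/-- Sum of the dfs scores of all nodes at level `ℓ` over all ordered trees with `n` edges. -/
noncomputable def totalD (n ℓ : ℕ) : ℕ :=
  ∑ w ∈ dyckWords n, ∑ v ∈ nodesAtLevel n w ℓ, dfsScore n w v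

/-- Sum of the bfs scores of all nodes at level `ℓ` over all ordered trees with `n` edges. -/
noncomputable def totalB (n ℓ : ℕ) : ℕ :=
  ∑ w ∈ dyckWords n, ∑ v ∈ nodesAtLevel n w ℓ, bfsScore n w v

/-- Total number of nodes at level `ℓ` among all ordered trees with `n` edges. -/
noncomputable def levelCount (n ℓ : ℕ) : ℕ :=
  ∑ w ∈ dyckWords n, (nodesAtLevel n w ℓ).card


/-- Number of unrestricted paths with `m` steps and displacement `d`. -/
def pathW : ℕ → ℤ → ℤ
  | 0, d => if d = 0 then 1 else 0
  | m + 1, d => pathW m (d + 1) + pathW m (d - 1)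

/-- Number of nonnegative paths with `m` steps from `a` to `t`. -/
def pathP : ℕ → ℤ → ℤ → ℤ
  | 0, a, t => if 0 ≤ a then (if a = t then 1 else 0) else 0
  | m + 1, a, t => if 0 ≤ a then pathP m (a + 1) t + pathP m (a - 1) t else 0

theorem pathW_even (m : ℕ) : ∀ d : ℤ, pathW m (-d) = pathW m d := by
  induction m with
  | zero => intro d; simp [pathW]
  | succ m ih =>
    intro d
    simp only [pathW]
    rw [← ih (d + 1), ← ih (d - 1), add_comm]
    congr 2 <;> ring

theorem pathW_zero_of_gt (m : ℕ) : ∀ d : ℤ, (m : ℤ) < d → pathW m d = 0 := by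
  induction m with
  | zero => intro d hd; simp only [pathW]; rw [if_neg]; push_cast at hd; omega
  | succ m ih =>
    intro d hd
    push_cast at hd
    simp only [pathW]
    rw [ih _ (by omega), ih _ (by omega)]; rfl

theorem pathW_choose (m : ℕ) : ∀ k : ℕ, pathW m ((m : ℤ) - 2 * k) = (m.choose k : ℤ) := by
  induction m with
  | zero =>
    intro k
    cases k with
    | zero => simp [pathW]
    | succ k => simp only [pathW]; rw [if_neg (by push_cast; omega)]; simp
  | succ m ih =>
    intro k
    cases k with
    | zero =>
      have h0 := ih 0
      simp only [pathW]
      rw [pathW_zero_of_gt m _ (by push_cast; omega)]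
      simp only [Nat.choose_zero_right] at h0 ⊢
      rw [← h0, zero_add]
      congr 1; push_cast; ring
    | succ k =>
      simp only [pathW]
      rw [Nat.choose_succ_succ]
      push_cast
      rw [← ih k, ← ih (k + 1)]
      congr 2 <;> push_cast <;> ring

theorem pathW_ratio (m : ℕ) :
    ∀ d : ℤ, ((m : ℤ) - d) * pathW m d = ((m : ℤ) + d + 2) * pathW m (d + 2) := by
  induction m with
  | zero =>
    intro d
    simp only [pathW]
    split_ifs <;> push_cast <;> omega
  | succ m ih =>
    intro d
    simp only [pathW]
    have h1 := ih (d - 1)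
    have h2 := ih (d + 1)
    rw [show d - 1 + 2 = d + 1 by ring] at h1
    rw [show d + 1 + 2 = d + 2 + 1 by ring] at h2
    rw [show d + 2 - 1 = d + 1 by ring]
    push_cast
    linear_combination h1 + h2

theorem pathP_neg (m : ℕ) (a t : ℤ) (ha : a < 0) : pathP m a t = 0 := by
  cases m <;> simp [pathP, not_le.mpr ha]

theorem pathP_eq (t : ℤ) (ht : -1 ≤ t) (m : ℕ) :
    ∀ a : ℤ, -1 ≤ a → pathP m a t = pathW m (a - t) - pathW m (a + t + 2) := by
  induction m with
  | zero =>
    intro a ha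
    simp only [pathP, pathW]
    split_ifs <;> omega
  | succ m ih =>
    intro a ha
    by_cases h : 0 ≤ a
    · simp only [pathP, pathW, if_pos h]
      rw [ih _ (by omega), ih _ (by omega)]
      rw [show a + 1 - t = a - t + 1 by ring, show a - 1 - t = a - t - 1 by ring,
        show a + 1 + t + 2 = a + t + 2 + 1 by ring, show a - 1 + t + 2 = a + t + 2 - 1 by ring]
      ring
    · have : a = -1 := by omega
      subst this
      rw [pathP_neg _ _ _ (by omega), ← pathW_even _ (-1 - t)]
      rw [show -(-1 - t) = -1 + t + 2 by ring]; ring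

theorem passage (y : ℤ) (hy : y ≤ -1) (m : ℕ) : ∀ a : ℤ, 0 ≤ a →
    ∑ j ∈ Finset.range m, pathP j a 0 * pathW (m - 1 - j) (-1 - y) = pathW m (a - y) := by
  induction m with
  | zero =>
    intro a ha
    simp only [pathW, Finset.range_zero, Finset.sum_empty]
    rw [if_neg (by omega)]
  | succ m ih =>
    intro a ha
    rw [Finset.sum_range_succ']
    have e : ∀ j ∈ Finset.range m, pathP (j + 1) a 0 * pathW (m + 1 - 1 - (j + 1)) (-1 - y)
        = pathP j (a + 1) 0 * pathW (m - 1 - j) (-1 - y)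
          + pathP j (a - 1) 0 * pathW (m - 1 - j) (-1 - y) := by
      intro j _
      rw [show m + 1 - 1 - (j + 1) = m - 1 - j by omega]
      simp only [pathP, if_pos ha]; ring
    rw [Finset.sum_congr rfl e, Finset.sum_add_distrib, ih _ (by omega)]
    simp only [pathW, pathP, if_pos ha]
    rw [show a + 1 - y = a - y + 1 by ring, add_assoc]
    congr 1
    by_cases h : a = 0
    · subst h
      rw [Finset.sum_eq_zero (fun j _ => by rw [pathP_neg _ _ _ (by omega)]; ring)]
      simp
      congr 1; ring
    · rw [ih _ (by omega), if_neg h, show a - 1 - y = a - y - 1 by ring]; ring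

theorem final_identity (n ℓ : ℕ) (h : ℓ ≤ n) :
    ∑ i ∈ Finset.range (2 * n), ((i : ℤ) + 1 + ℓ) * pathP i 0 ((ℓ : ℤ) - 1)
      * pathP (2 * n - 1 - i) ℓ 0 = 2 * (ℓ * Nat.choose (2 * n) (n - ℓ) : ℕ) := by
  have e : ∀ i ∈ Finset.range (2 * n), ((i : ℤ) + 1 + ℓ) * pathP i 0 ((ℓ : ℤ) - 1)
      * pathP (2 * n - 1 - i) ℓ 0
      = 2 * ℓ * (pathP (2 * n - 1 - i) ℓ 0 * pathW (2 * n - 1 - (2 * n - 1 - i)) ((ℓ : ℤ) - 1)) := by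
    intro i hi
    have hi' := Finset.mem_range.mp hi
    rw [show 2 * n - 1 - (2 * n - 1 - i) = i by omega]
    rw [pathP_eq ((ℓ : ℤ) - 1) (by omega) i 0 (by omega)]
    have h1 := pathW_ratio i ((ℓ : ℤ) - 1)
    rw [show (0 : ℤ) - (ℓ - 1) = -((ℓ : ℤ) - 1) by ring, pathW_even,
      show (0 : ℤ) + (ℓ - 1) + 2 = (ℓ : ℤ) - 1 + 2 by ring]
    linear_combination pathP (2 * n - 1 - i) ℓ 0 * h1
  rw [Finset.sum_congr rfl e, ← Finset.mul_sum]
  rw [Finset.sum_range_reflect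
    (fun j => pathP j ℓ 0 * pathW (2 * n - 1 - j) ((ℓ : ℤ) - 1)) (2 * n)]
  rcases Nat.eq_zero_or_pos ℓ with h0 | h0
  · subst h0; simp
  · have := passage (-(ℓ : ℤ)) (by omega) (2 * n) ℓ (by omega)
    rw [show -1 - -(ℓ : ℤ) = (ℓ : ℤ) - 1 by ring] at this
    rw [this, show (ℓ : ℤ) - -(ℓ : ℤ) = ((2 * n : ℕ) : ℤ) - 2 * ((n - ℓ : ℕ) : ℤ) by
      push_cast [h]; ring, pathW_choose]
    push_cast; ring

/-- `w`, started at height `a`, stays nonnegative and ends at `0`. -/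
def GoodW (m : ℕ) (a : ℤ) (w : Fin m → Bool) : Prop :=
  (∀ k : ℕ, k ≤ m → 0 ≤ a + heightAt m w k) ∧ a + heightAt m w m = 0

/-- the step of a letter -/
def stepZ (b : Bool) : ℤ := if b = true then 1 else -1

theorem heightAt_sum (m : ℕ) (w : Fin m → Bool) (k : ℕ) :
    heightAt m w k = ∑ i : Fin m, if (i : ℕ) < k then stepZ (w i) else 0 := by
  unfold heightAt
  rw [Finset.card_filter, Finset.card_filter]
  push_cast
  rw [← Finset.sum_sub_distrib]
  refine Finset.sum_congr rfl fun i _ => ?_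
  cases hw : w i <;> by_cases hk : (i : ℕ) < k <;> simp [stepZ, hk]

theorem heightAt_zero (m : ℕ) (w : Fin m → Bool) : heightAt m w 0 = 0 := by
  simp [heightAt_sum]

theorem heightAt_cons (m : ℕ) (b : Bool) (w : Fin m → Bool) (k : ℕ) :
    heightAt (m + 1) (Fin.cons b w : Fin (m + 1) → Bool) (k + 1) = stepZ b + heightAt m w k := by
  simp [heightAt_sum, Fin.sum_univ_succ]

theorem goodW_cons (m : ℕ) (a : ℤ) (b : Bool) (w : Fin m → Bool) :
    GoodW (m + 1) a (Fin.cons b w : Fin (m + 1) → Bool) ↔ 0 ≤ a ∧ GoodW m (a + stepZ b) w := by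
  unfold GoodW
  rw [heightAt_cons, ← add_assoc]
  constructor
  · rintro ⟨h1, h2⟩
    refine ⟨by simpa [heightAt_zero] using h1 0 (by omega), fun k hk => ?_, h2⟩
    have := h1 (k + 1) (by omega)
    rwa [heightAt_cons, ← add_assoc] at this
  · rintro ⟨h0, h1, h2⟩
    refine ⟨fun k hk => ?_, h2⟩
    cases k with
    | zero => simpa [heightAt_zero] using h0
    | succ k => rw [heightAt_cons, ← add_assoc]; exact h1 k (by omega)

theorem sum_cons (m : ℕ) (f : (Fin (m + 1) → Bool) → ℤ) :
    ∑ w, f w = ∑ w : Fin m → Bool, f (Fin.cons true w : Fin (m + 1) → Bool)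
      + ∑ w : Fin m → Bool, f (Fin.cons false w : Fin (m + 1) → Bool) := by
  rw [← (Fin.consEquiv (fun _ : Fin (m + 1) => Bool)).sum_comp, Fintype.sum_prod_type]
  simp [Fin.consEquiv]

theorem count_good (m : ℕ) : ∀ a : ℤ,
    (∑ w : Fin m → Bool, if GoodW m a w then (1 : ℤ) else 0) = pathP m a 0 := by
  induction m with
  | zero =>
    intro a
    simp only [pathP, GoodW, heightAt_sum]
    simp
    split_ifs <;> omega
  | succ m ih =>
    intro a
    rw [sum_cons]
    simp only [goodW_cons, pathP]
    by_cases h : 0 ≤ a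
    · simp only [h, true_and, if_true, ih, stepZ]
      simp [sub_eq_add_neg]
    · simp [h]

theorem weighted_good (ℓ : ℕ) (m : ℕ) : ∀ (a : ℤ) (g : ℕ → ℤ),
    (∑ w : Fin m → Bool, if GoodW m a w then
      (∑ i : Fin m, if w i = true ∧ a + heightAt m w ((i : ℕ) + 1) = ℓ then g i else 0) else 0)
    = ∑ i ∈ Finset.range m, g i * pathP i a ((ℓ : ℤ) - 1) * pathP (m - 1 - i) ℓ 0 := by
  induction m with
  | zero => intro a g; simp
  | succ m ih =>
    intro a g
    rw [sum_cons, Finset.sum_range_succ']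
    by_cases h : 0 ≤ a
    · have e : ∀ i ∈ Finset.range m,
          g (i + 1) * pathP (i + 1) a ((ℓ : ℤ) - 1) * pathP (m + 1 - 1 - (i + 1)) ℓ 0
          = g (i + 1) * pathP i (a + 1) ((ℓ : ℤ) - 1) * pathP (m - 1 - i) ℓ 0
          + g (i + 1) * pathP i (a - 1) ((ℓ : ℤ) - 1) * pathP (m - 1 - i) ℓ 0 := by
        intro i _
        rw [show m + 1 - 1 - (i + 1) = m - 1 - i by omega]
        simp only [pathP, if_pos h]; ring
      rw [Finset.sum_congr rfl e, Finset.sum_add_distrib,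
        ← ih (a + 1) (fun i => g (i + 1)), ← ih (a - 1) (fun i => g (i + 1))]
      simp only [goodW_cons, h, true_and, Fin.sum_univ_succ, Fin.cons_zero, Fin.cons_succ,
        Fin.val_zero, Fin.val_succ, heightAt_cons, heightAt_zero, ← add_assoc]
      have s1 : a + stepZ true = a + 1 := by simp [stepZ]
      have s2 : a + stepZ false = a - 1 := by simp [stepZ]; ring
      rw [s1, s2]
      have t1 : ∀ w : Fin m → Bool, ∀ X Y : ℤ, (if GoodW m (a + 1) w then X + Y else 0)
          = X * (if GoodW m (a + 1) w then 1 else 0) + if GoodW m (a + 1) w then Y else 0 := by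
        intro w X Y; split_ifs <;> ring
      simp only [t1, Finset.sum_add_distrib, ← Finset.mul_sum, count_good]
      simp only [pathP, if_pos h, add_zero, Bool.false_eq_true, false_and, if_false, zero_add,
        Nat.add_sub_cancel, Nat.sub_zero]
      by_cases hl : a + 1 = ℓ
      · rw [if_pos hl, if_pos (by omega), hl]; ring
      · rw [if_neg hl, if_neg (by omega)]; ring
    · simp only [goodW_cons, h, false_and, if_false, Finset.sum_const_zero]
      simp [pathP_neg _ a _ (not_le.mp h)]

theorem isDyck_iff (n : ℕ) (w : Fin (2 * n) → Bool) : IsDyck n w ↔ GoodW (2 * n) 0 w := by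
  unfold IsDyck GoodW
  simp only [zero_add]
  rw [and_comm]
  refine and_congr Iff.rfl ?_
  unfold heightAt
  simp only [Fin.is_lt, true_and]
  have h := Finset.card_filter_add_card_filter_not
    (s := (Finset.univ : Finset (Fin (2 * n)))) (fun i => w i = true)
  simp only [Bool.not_eq_true, Finset.card_univ, Fintype.card_fin] at h
  omega

theorem score_eq (n ℓ : ℕ) (w : Fin (2 * n) → Bool) (i : Fin (2 * n)) (hi : w i = true)
    (hl : heightAt (2 * n) w ((i : ℕ) + 1) = ℓ) :
    2 * (dfsScore n w (some i) : ℤ) = (i : ℕ) + 1 + ℓ := by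
  have h1 : (Finset.univ.filter (fun j : Fin (2 * n) => (j : ℕ) < (i : ℕ) + 1 ∧ w j = true))
      = insert i (Finset.univ.filter (fun j : Fin (2 * n) => (j : ℕ) < (i : ℕ) ∧ w j = true)) := by
    ext j
    simp only [Finset.mem_filter, Finset.mem_univ, true_and, Finset.mem_insert, Fin.ext_iff]
    constructor
    · rintro ⟨h, h'⟩
      by_cases e : (j : ℕ) = i
      · exact Or.inl e
      · exact Or.inr ⟨by omega, h'⟩
    · rintro (e | ⟨h, h'⟩)
      · have : j = i := Fin.ext e
        subst this; exact ⟨by omega, hi⟩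
      · exact ⟨by omega, h'⟩
  have h2 : (Finset.univ.filter (fun j : Fin (2 * n) => (j : ℕ) < (i : ℕ) + 1 ∧ w j = true)).card
      + (Finset.univ.filter (fun j : Fin (2 * n) => (j : ℕ) < (i : ℕ) + 1 ∧ w j = false)).card
      = (i : ℕ) + 1 := by
    have h := Finset.card_filter_add_card_filter_not
      (s := (Finset.univ.filter (fun j : Fin (2 * n) => (j : ℕ) < (i : ℕ) + 1)))
      (fun j => w j = true)
    simp only [Bool.not_eq_true, Finset.filter_filter] at h
    rw [h]
    have : (Finset.univ.filter (fun j : Fin (2 * n) => (j : ℕ) < (i : ℕ) + 1)) = Finset.Iic i := by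
      ext j
      simp only [Finset.mem_filter, Finset.mem_univ, true_and, Finset.mem_Iic, Fin.le_def]
      omega
    rw [this, Fin.card_Iic]
  have h3 := congrArg Finset.card h1
  rw [Finset.card_insert_of_notMem (by simp)] at h3
  unfold heightAt at hl
  simp only [dfsScore]
  omega

/-- For all n ≥ 0 and 0 ≤ ℓ ≤ n, totalD(n,ℓ) = ℓ·C(2n, n-ℓ). -/
theorem totalD_eq (n ℓ : ℕ) (h : ℓ ≤ n) :
    totalD n ℓ = ℓ * Nat.choose (2 * n) (n - ℓ) := by
  have key : 2 * (totalD n ℓ : ℤ) = 2 * (ℓ * Nat.choose (2 * n) (n - ℓ) : ℕ) := by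
    rw [← final_identity n ℓ h, ← weighted_good ℓ (2 * n) 0 (fun i => (i : ℤ) + 1 + ℓ)]
    unfold totalD dyckWords nodesAtLevel
    push_cast
    rw [Finset.sum_filter, Finset.mul_sum]
    refine Finset.sum_congr rfl fun w _ => ?_
    simp only [isDyck_iff]
    split_ifs with hg
    · rw [Finset.sum_filter, Fintype.sum_option, mul_add, Finset.mul_sum]
      have h0 : (dfsScore n w none : ℤ) = 0 := rfl
      rw [h0, ite_self, mul_zero, zero_add]
      refine Finset.sum_congr rfl fun i _ => ?_
      simp only [zero_add]
      by_cases hc : w i = true ∧ heightAt (2 * n) w ((i : ℕ) + 1) = ℓ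
      · have hc' : isNode n w (some i) ∧ nodeLevel n w (some i) = (ℓ : ℤ) := hc
        rw [if_pos hc, if_pos hc']
        exact score_eq n ℓ w i hc.1 hc.2
      · have hc' : ¬ (isNode n w (some i) ∧ nodeLevel n w (some i) = (ℓ : ℤ)) := hc
        rw [if_neg hc, if_neg hc', mul_zero]
    · rfl
  exact_mod_cast (mul_left_cancel₀ (by norm_num) key)
end

section
/- For every n ≥ 1 there exists a unique real threshold λ_n ∈ (0,n) such that totalB(n,ℓ) ≤ totalD(n,ℓ) if and only if ℓ ≤ λ_n, where ℓ ranges over integers in [0,n]; i.e., the function f_n(ℓ) = totalB(n,ℓ) − totalD(n,ℓ) = (ℓ+1)·C(2n, n-ℓ-1) − C(2n, n-2ℓ-1) − 2∑_{j=ℓ+1}^{2ℓ} C(2n, n-j) is ≤ 0 for ℓ ≤ λ_n and > 0 for λ_n < ℓ < n, changing sign exactly once on (0,n). -/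
/-- Binomial coefficient with an integer lower index: zero when the lower index is
negative. -/
def chZ (N : ℕ) (k : ℤ) : ℤ := if 0 ≤ k then (N.choose k.toNat : ℤ) else 0

/-- f_n(ℓ) = totalB(n,ℓ) − totalD(n,ℓ)
  = (ℓ+1)·C(2n, n−ℓ−1) − C(2n, n−2ℓ−1) − 2·∑_{j=ℓ+1}^{2ℓ} C(2n, n−j). -/
def fdiff (n ℓ : ℕ) : ℤ :=
  (ℓ + 1 : ℤ) * chZ (2 * n) ((n : ℤ) - ℓ - 1) - chZ (2 * n) ((n : ℤ) - 2 * ℓ - 1)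
    - 2 * ∑ j ∈ Finset.Icc (ℓ + 1) (2 * ℓ), chZ (2 * n) ((n : ℤ) - j)

/-- The sequence a_j = C(2n, n-j). -/
def aSeq (n j : ℕ) : ℤ := chZ (2 * n) ((n : ℤ) - j)

theorem aSeq_le (n j : ℕ) (h : j ≤ n) : aSeq n j = ((2 * n).choose (n - j) : ℤ) := by
  unfold aSeq chZ
  rw [if_pos (by omega)]
  congr 2
  omega

theorem aSeq_gt (n j : ℕ) (h : n < j) : aSeq n j = 0 := by
  unfold aSeq chZ
  rw [if_neg (by omega)]

theorem aSeq_nonneg (n j : ℕ) : 0 ≤ aSeq n j := by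
  unfold aSeq chZ
  split_ifs <;> positivity

theorem aSeq_pos (n j : ℕ) (h : j ≤ n) : 0 < aSeq n j := by
  rw [aSeq_le n j h]
  exact_mod_cast Nat.choose_pos (by omega)

theorem aSeq_rec (n j : ℕ) (h : j ≤ n) :
    aSeq n (j + 1) * (n + j + 1) = aSeq n j * (n - j) := by
  rcases Nat.eq_or_lt_of_le h with rfl | h'
  · rw [aSeq_gt _ _ (Nat.lt_succ_self _)]; simp
  · rw [aSeq_le n j h, aSeq_le n (j + 1) h']
    obtain ⟨d, rfl⟩ := Nat.exists_eq_add_of_lt h'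
    have e1 : j + d + 1 - j = d + 1 := by omega
    have e2 : j + d + 1 - (j + 1) = d := by omega
    rw [e1, e2]
    have := Nat.choose_succ_right_eq (2 * (j + d + 1)) d
    have e3 : 2 * (j + d + 1) - d = 2 * j + d + 2 := by omega
    rw [e3] at this
    have h2 : (((2 * (j + d + 1)).choose (d + 1) : ℤ)) * (d + 1)
        = ((2 * (j + d + 1)).choose d : ℤ) * (2 * j + d + 2) := by exact_mod_cast this
    push_cast at h2 ⊢
    linear_combination -h2

theorem aSeq_anti (n : ℕ) : Antitone (aSeq n) := by
  apply antitone_nat_of_succ_le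
  intro j
  rcases Nat.lt_or_ge n j with h | h
  · rw [aSeq_gt n (j + 1) (by omega)]; exact aSeq_nonneg _ _
  · have h1 := aSeq_rec n j h
    have h2 := aSeq_nonneg n j
    by_contra hc
    push Not at hc
    have : (0 : ℤ) < n + j + 1 := by positivity
    nlinarith [mul_lt_mul_of_pos_right hc this, mul_nonneg h2 (Int.natCast_nonneg j)]

theorem aSeq_lc (n j k : ℕ) (h : j ≤ k) :
    aSeq n (k + 1) * aSeq n j ≤ aSeq n k * aSeq n (j + 1) := by
  rcases Nat.lt_or_ge n k with hk | hk
  · rw [aSeq_gt n (k + 1) (by omega), aSeq_gt n k hk]; simp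
  · have h1 := aSeq_rec n k hk
    have h2 := aSeq_rec n j (h.trans hk)
    have p1 : (0 : ℤ) < n + k + 1 := by positivity
    have p2 : (0 : ℤ) < n + j + 1 := by positivity
    have hjk : (j : ℤ) ≤ k := by exact_mod_cast h
    have q := mul_nonneg (aSeq_nonneg n k) (aSeq_nonneg n j)
    have c : ((n : ℤ) - k) * (n + j + 1) ≤ (n - j) * (n + k + 1) := by nlinarith
    have key := mul_le_mul_of_nonneg_left c q
    refine le_of_mul_le_mul_right ?_ (mul_pos p1 p2)
    calc aSeq n (k + 1) * aSeq n j * ((n + k + 1) * (n + j + 1))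
        = aSeq n k * aSeq n j * ((n - k) * (n + j + 1)) := by
          linear_combination (aSeq n j * (n + j + 1)) * h1
      _ ≤ _ := key
      _ = _ := by linear_combination (-(aSeq n k * (n + k + 1))) * h2

theorem fdiff_eq (n l : ℕ) : fdiff n l = (l + 1 : ℤ) * aSeq n (l + 1) - aSeq n (2 * l + 1)
    - 2 * ∑ i ∈ Finset.range l, aSeq n (l + 1 + i) := by
  have hs : ∑ j ∈ Finset.Icc (l + 1) (2 * l), chZ (2 * n) ((n : ℤ) - j)
      = ∑ i ∈ Finset.range l, aSeq n (l + 1 + i) := by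
    have : Finset.Icc (l + 1) (2 * l) = Finset.Ico (l + 1) (2 * l + 1) := by
      ext x; simp
    rw [this, Finset.sum_Ico_eq_sum_range]
    have e : 2 * l + 1 - (l + 1) = l := by omega
    rw [e]
    rfl
  unfold fdiff
  rw [hs]
  unfold aSeq
  push_cast
  simp only [sub_sub]

theorem fdiff_zero (n : ℕ) : fdiff n 0 = 0 := by
  rw [fdiff_eq]; simp

theorem half_of_pos (n l : ℕ) (h : 0 < fdiff n l) :
    2 * aSeq n (2 * l + 1) ≤ aSeq n (l + 1) := by
  rcases l with _ | k
  · rw [fdiff_zero] at h; omega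
  · by_contra hc
    push Not at hc
    rw [fdiff_eq, Finset.sum_range_succ'] at h
    have hs : ∑ i ∈ Finset.range k, aSeq n (k + 1 + 1)
        ≤ ∑ i ∈ Finset.range k, 2 * aSeq n (k + 1 + 1 + (i + 1)) := by
      apply Finset.sum_le_sum
      intro i hi
      have hi' := Finset.mem_range.1 hi
      have := aSeq_anti n (show k + 1 + 1 + (i + 1) ≤ 2 * (k + 1) + 1 by omega)
      linarith
    rw [← Finset.mul_sum, Finset.sum_const, Finset.card_range, nsmul_eq_mul] at hs
    have h0 := aSeq_nonneg n (2 * (k + 1) + 1)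
    push_cast at h
    simp only [add_zero] at h
    linarith

theorem fdiff_step (n l : ℕ) (hl : l + 1 < n) (h : 0 < fdiff n l) : 0 < fdiff n (l + 1) := by
  have hh := half_of_pos n l h
  have hB := aSeq_pos n (l + 2) (by omega)
  have hA := aSeq_pos n (l + 1) (by omega)
  have hs : (∑ i ∈ Finset.range (l + 1), aSeq n (l + 1 + 1 + i)) * aSeq n (l + 1)
      ≤ (∑ i ∈ Finset.range (l + 1), aSeq n (l + 1 + i)) * aSeq n (l + 2) := by
    rw [Finset.sum_mul, Finset.sum_mul]
    apply Finset.sum_le_sum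
    intro i _
    have := aSeq_lc n (l + 1) (l + 1 + i) (by omega)
    rw [show l + 1 + 1 + i = l + 1 + i + 1 by ring]
    exact this
  have hlast := aSeq_lc n (l + 1) (2 * l + 2) (by omega)
  have hanti := aSeq_anti n (show 2 * l + 1 ≤ 2 * l + 2 by omega)
  rw [Finset.sum_range_succ (fun i => aSeq n (l + 1 + i)),
    show l + 1 + l = 2 * l + 1 by ring] at hs
  have e := fdiff_eq n l
  have e' := fdiff_eq n (l + 1)
  rw [show 2 * (l + 1) + 1 = 2 * l + 2 + 1 by ring] at e'
  push_cast at e'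
  have hpos : 0 < aSeq n (l + 2) * (fdiff n l + (aSeq n (l + 1) - aSeq n (2 * l + 1)
      - aSeq n (2 * l + 2))) := by
    apply mul_pos hB; linarith
  have : 0 < fdiff n (l + 1) * aSeq n (l + 1) := by
    refine lt_of_lt_of_le hpos ?_
    rw [e, e']
    simp only [show l + 1 + 1 = l + 2 by rfl] at *
    linarith
  exact pos_of_mul_pos_left this hA.le

theorem fdiff_mono (n l k : ℕ) (hlk : l ≤ k) (hk : k < n) (h : 0 < fdiff n l) :
    0 < fdiff n k := by
  induction k, hlk using Nat.le_induction with
  | base => exact h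
  | succ k _ ih => exact fdiff_step n k hk (ih (by omega))

/-- For every n ≥ 1 there is a threshold λ_n ∈ (0,n) such that, for integer levels
ℓ ∈ [0,n), totalB(n,ℓ) ≤ totalD(n,ℓ) iff ℓ ≤ λ_n; i.e. f_n is ≤ 0 for ℓ ≤ λ_n and
> 0 for λ_n < ℓ < n, and the sign change on (0,n) is unique. -/
theorem threshold_exists_unique (n : ℕ) (hn : 1 ≤ n) :
    (∃ lam : ℝ, 0 < lam ∧ lam < n ∧
      ∀ ℓ : ℕ, ℓ < n → (fdiff n ℓ ≤ 0 ↔ (ℓ : ℝ) ≤ lam)) ∧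
    (∃! m : ℕ, m < n ∧ (∀ ℓ : ℕ, ℓ ≤ m → fdiff n ℓ ≤ 0) ∧
      ∀ ℓ : ℕ, m < ℓ → ℓ < n → 0 < fdiff n ℓ) := by
  obtain ⟨m, hm, hm1, hm2⟩ : ∃ m : ℕ, m < n ∧ (∀ ℓ : ℕ, ℓ ≤ m → fdiff n ℓ ≤ 0) ∧
      ∀ ℓ : ℕ, m < ℓ → ℓ < n → 0 < fdiff n ℓ := by
    have hle := Nat.findGreatest_le (P := fun l => fdiff n l ≤ 0) (n - 1)
    have hsp := Nat.findGreatest_spec (P := fun l => fdiff n l ≤ 0) (Nat.zero_le (n - 1))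
      (fdiff_zero n).le
    refine ⟨Nat.findGreatest (fun l => fdiff n l ≤ 0) (n - 1), by omega, ?_, ?_⟩
    · intro l hl
      by_contra hc
      push Not at hc
      have := fdiff_mono n l _ hl (by omega) hc
      exact absurd hsp (not_le.2 this)
    · intro l h1 h2
      exact not_le.1 (Nat.findGreatest_is_greatest h1 (by omega))
  refine ⟨⟨m + 1 / 2, by positivity, ?_, ?_⟩, m, ⟨hm, hm1, hm2⟩, ?_⟩
  · have : (m : ℝ) + 1 ≤ n := by exact_mod_cast hm
    linarith
  · intro l hl
    constructor
    · intro h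
      have hlm : l ≤ m := by
        by_contra hc
        exact absurd (hm2 l (by omega) hl) (not_lt.2 h)
      have : (l : ℝ) ≤ m := by exact_mod_cast hlm
      linarith
    · intro h
      apply hm1
      by_contra hc
      have : (m : ℝ) + 1 ≤ l := by exact_mod_cast (not_le.1 hc)
      linarith
  · rintro k ⟨hk, hk1, hk2⟩
    rcases lt_trichotomy k m with h | h | h
    · exact absurd (hk2 m h hm) (not_lt.2 (hm1 m le_rfl))
    · exact h
    · exact absurd (hm2 k h hk) (not_lt.2 (hk1 k le_rfl))
end

section
/- For all n ≥ 0 and 0 ≤ ℓ ≤ n, totalB(n,ℓ) equals ∑_{k=1}^{⌊(ℓ+1)/2⌋} (−1)^{k−1} k·C(ℓ−k+1, k)·((3ℓ+1)/(n−k+2ℓ+2))·C(2n−2k+ℓ+2, n−ℓ−k+1) − ∑_{k=1}^{⌊ℓ/2⌋} (−1)^{k−1} k·C(ℓ−k, k)·((3ℓ+2)/(n−k+2ℓ+2))·C(2n−2k+ℓ+1, n−ℓ−k). -/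
open scoped Classical

/-- Binomial coefficient with an integer lower index: zero when the lower index is
negative. -/
def ch (N : ℕ) (k : ℤ) : ℚ := if 0 ≤ k then (N.choose k.toNat : ℚ) else 0


namespace TB

open BinaryTree

/-- number of nodes at level `k` of the ordered tree encoded by a binary tree -/
def lv : BinaryTree Unit → ℕ → ℕ
  | nil, 0 => 1
  | nil, _ + 1 => 0
  | node _ _ _, 0 => 1
  | node _ a b, k + 1 => lv a k + lv b (k + 1)

lemma lv_zero (t : BinaryTree Unit) : lv t 0 = 1 := by
  cases t <;> simp [lv]

/-- number of nodes at levels below `l` -/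
def low (t : BinaryTree Unit) (l : ℕ) : ℕ := ∑ d ∈ Finset.range l, lv t d

lemma low_node (a b : BinaryTree Unit) (l : ℕ) :
    low (node () a b) (l + 1) = low a l + low b (l + 1) := by
  simp only [low]
  rw [Finset.sum_range_succ', Finset.sum_range_succ' (fun d => lv b d)]
  simp [lv, lv_zero, Finset.sum_add_distrib]
  ring

/-- sum of bfs scores at level `l` -/
def bt (t : BinaryTree Unit) (l : ℕ) : ℚ :=
  (lv t l : ℚ) * low t l + (lv t l : ℚ) * ((lv t l : ℚ) - 1) / 2

noncomputable def gf (f : BinaryTree Unit → ℚ) : PowerSeries ℚ :=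
  PowerSeries.mk fun n => ∑ t ∈ treesOfNumNodesEq n, f t

noncomputable def gf2 (f : BinaryTree Unit → BinaryTree Unit → ℚ) : PowerSeries ℚ :=
  PowerSeries.mk fun n => ∑ ij ∈ Finset.HasAntidiagonal.antidiagonal n,
    ∑ a ∈ treesOfNumNodesEq ij.1, ∑ b ∈ treesOfNumNodesEq ij.2, f a b

lemma gf_node (f : BinaryTree Unit → ℚ) :
    gf f = PowerSeries.C (f nil) + PowerSeries.X * gf2 (fun a b => f (node () a b)) := by
  ext n
  cases n with
  | zero => simp [gf]
  | succ n =>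
    simp only [gf, gf2, map_add, PowerSeries.coeff_mk, PowerSeries.coeff_succ_X_mul,
      PowerSeries.coeff_C, Nat.succ_ne_zero, if_false, zero_add]
    rw [treesOfNumNodesEq_succ, Finset.sum_biUnion]
    · refine Finset.sum_congr rfl fun ij _ => ?_
      rw [Finset.sum_map, Finset.sum_product]
      rfl
    · simp_rw [Set.PairwiseDisjoint, Set.Pairwise, Finset.disjoint_left]
      aesop

lemma gf2_mul (g h : BinaryTree Unit → ℚ) : gf2 (fun a b => g a * h b) = gf g * gf h := by
  ext n
  simp only [gf, gf2, PowerSeries.coeff_mk, PowerSeries.coeff_mul, Finset.sum_mul_sum]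

lemma gf2_add (f g : BinaryTree Unit → BinaryTree Unit → ℚ) :
    gf2 (fun a b => f a b + g a b) = gf2 f + gf2 g := by
  ext n
  simp only [gf2, PowerSeries.coeff_mk, map_add, Finset.sum_add_distrib]

lemma gf_sum {ι : Type} (s : Finset ι) (f : ι → BinaryTree Unit → ℚ) :
    gf (fun t => ∑ i ∈ s, f i t) = ∑ i ∈ s, gf (f i) := by
  ext n
  simp only [gf, PowerSeries.coeff_mk, map_sum]
  rw [Finset.sum_comm]

/-- Catalan series -/
noncomputable def cs : PowerSeries ℚ := gf (fun _ => 1)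

local notation "X" => (PowerSeries.X : PowerSeries ℚ)

lemma cs_eq : cs = 1 + X * cs ^ 2 := by
  have h := gf_node (fun _ => 1)
  have h2 := gf2_mul (fun _ => 1) (fun _ => 1)
  simp only [mul_one] at h2
  rw [h2] at h
  unfold cs
  rw [sq]
  simpa using h

lemma gf_lv (k : ℕ) : gf (fun t => (lv t k : ℚ)) = cs * (X * cs ^ 2) ^ k := by
  induction k with
  | zero => simp [lv_zero, cs]
  | succ k ih =>
    have h := gf_node (fun t => (lv t (k + 1) : ℚ))
    have h1 := gf2_mul (fun t => (lv t k : ℚ)) (fun _ => 1)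
    have h2 := gf2_mul (fun _ => 1) (fun t => (lv t (k + 1) : ℚ))
    have h3 := gf2_add (fun a _ => (lv a k : ℚ) * 1) (fun _ b => 1 * (lv b (k + 1) : ℚ))
    rw [h1, h2] at h3
    simp only [mul_one, one_mul] at h3
    simp only [lv, Nat.cast_add, h3] at h
    rw [ih] at h
    change _ = _ + X * (cs * _ * cs + cs * _) at h
    simp only [Nat.cast_zero, map_zero, zero_add] at h
    generalize gf (fun t => (lv t (k + 1) : ℚ)) = N at *
    have hc := cs_eq
    rw [pow_succ]
    linear_combination cs * h - N * hc

/-- geometric sum -/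
noncomputable def S (l : ℕ) : PowerSeries ℚ := ∑ d ∈ Finset.range l, (X * cs ^ 2) ^ d

lemma S_succ (l : ℕ) : S (l + 1) = S l + (X * cs ^ 2) ^ l := by
  simp [S, Finset.sum_range_succ]

lemma S_succ' (l : ℕ) : S (l + 1) = 1 + (X * cs ^ 2) * S l := by
  simp only [S]
  rw [Finset.sum_range_succ', Finset.mul_sum, add_comm]
  simp [pow_succ']

lemma gf_low (l : ℕ) : gf (fun t => (low t l : ℚ)) = cs * S l := by
  simp only [low, Nat.cast_sum, gf_sum, gf_lv, S, Finset.mul_sum]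

lemma bt_node (a b : BinaryTree Unit) (l : ℕ) :
    bt (node () a b) (l + 1) = bt a l * 1 + (1 * bt b (l + 1) + ((lv a l : ℚ) * low b (l + 1)
      + ((low a l : ℚ) * lv b (l + 1) + (lv a l : ℚ) * lv b (l + 1)))) := by
  simp only [bt, low_node, lv]
  push_cast
  ring

lemma gf_bt_succ (l : ℕ) : gf (fun t => bt t (l + 1)) = (X * cs ^ 2) * gf (fun t => bt t l)
    + cs * (X * cs ^ 2) ^ (l + 1) * (S (l + 1) + S (l + 2) - 1) := by
  have h := gf_node (fun t => bt t (l + 1))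
  simp only [bt_node, gf2_add] at h
  rw [gf2_mul, gf2_mul, gf2_mul (fun a => (lv a l : ℚ)), gf2_mul (fun a => (low a l : ℚ)),
    gf2_mul (fun a => (lv a l : ℚ)), gf_lv, gf_lv, gf_low, gf_low] at h
  have h0 : bt nil (l + 1) = 0 := by simp [bt, lv]
  rw [h0] at h
  change _ = _ + X * (_ * cs + (cs * _ + _)) at h
  simp only [map_zero, zero_add] at h
  generalize gf (fun t => bt t (l + 1)) = N at *
  generalize gf (fun t => bt t l) = M at *
  have hc := cs_eq
  have e1 := S_succ' l
  have e2 := S_succ' (l + 1)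
  have e3 := S_succ (l + 1)
  set y := X * cs ^ 2 with hy
  have h4 : N = y * M + cs * y * (y ^ l * S (l + 1) + S l * y ^ (l + 1) + y ^ l * y ^ (l + 1)) := by
    rw [hy] at hc ⊢
    linear_combination cs * h - N * hc
  rw [h4, e3]
  linear_combination (-cs * y ^ (l + 1)) * e1

/-- the inner factor -/
noncomputable def T (l : ℕ) : PowerSeries ℚ := ∑ j ∈ Finset.range l, cs * S (j + 1)

lemma gf_bt (l : ℕ) : gf (fun t => bt t l) = cs * (X * cs ^ 2) ^ l * T l := by
  induction l with
  | zero =>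
    have : (fun t => bt t 0) = fun _ => 0 := by
      funext t; simp [bt, lv_zero, low]
    rw [this]
    ext n
    simp [gf, T]
  | succ l ih =>
    rw [gf_bt_succ, ih]
    simp only [T]
    rw [Finset.sum_range_succ]
    have e2 := S_succ' (l + 1)
    have hc := cs_eq
    rw [e2, pow_succ]
    linear_combination (-cs * (X * cs ^ 2) ^ l * (X * cs ^ 2) * S (l + 1)) * hc

/-- Fibonacci polynomials -/
noncomputable def Fb (l : ℕ) : PowerSeries ℚ :=
  PowerSeries.mk fun k => (-1) ^ k * ((l - k).choose k : ℚ)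

lemma Fb_zero : Fb 0 = 1 := by
  ext n
  cases n <;> simp [Fb, PowerSeries.coeff_one]

lemma Fb_one : Fb 1 = 1 := by
  ext n
  cases n <;> simp [Fb, PowerSeries.coeff_one]

lemma Fb_rec (l : ℕ) : Fb (l + 2) = Fb (l + 1) - X * Fb l := by
  ext n
  cases n with
  | zero => simp [Fb]
  | succ k =>
    simp only [Fb, map_sub, PowerSeries.coeff_mk, PowerSeries.coeff_succ_X_mul]
    rcases le_or_gt k l with h | h
    · have e1 : l + 2 - (k + 1) = (l - k) + 1 := by omega
      have e2 : l + 1 - (k + 1) = l - k := by omega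
      rw [e1, e2, Nat.choose_succ_succ]
      push_cast
      ring
    · have e1 : l + 2 - (k + 1) = 0 := by omega
      have e2 : l + 1 - (k + 1) = 0 := by omega
      have e3 : l - k = 0 := by omega
      obtain ⟨j, rfl⟩ : ∃ j, k = j + 1 := ⟨k - 1, by omega⟩
      rw [e1, e2, e3]
      simp

lemma cs_Fb (l : ℕ) : cs ^ l * Fb l = S (l + 1) ∧ cs ^ (l + 1) * Fb (l + 1) = S (l + 2) := by
  have hc := cs_eq
  induction l with
  | zero =>
    simp only [Fb_zero, zero_add, Fb_one, S, Finset.sum_range_succ, Finset.sum_range_zero]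
    constructor
    · simp
    · linear_combination hc
  | succ l ih =>
    refine ⟨ih.2, ?_⟩
    obtain ⟨h1, h2⟩ := ih
    rw [show l + 1 + 1 = l + 2 from rfl, Fb_rec]
    have e1 := S_succ' (l + 2)
    have e2 := S_succ' (l + 1)
    have e3 := S_succ (l + 1)
    simp only [pow_succ] at *
    linear_combination cs * h2 - X * cs * cs * h1 + S (l + 2) * hc
      + e2 - e1

noncomputable def dF (l : ℕ) : PowerSeries ℚ := PowerSeries.derivative ℚ (Fb l)

lemma dF_rec (l : ℕ) : dF (l + 2) = dF (l + 1) - Fb l - X * dF l := by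
  simp only [dF, Fb_rec, map_sub, Derivation.leibniz, smul_eq_mul, PowerSeries.derivative_X]
  ring

lemma T_eq (l : ℕ) : T l = - cs ^ l * dF (l + 1) + cs ^ (l + 1) * X * dF l := by
  induction l with
  | zero => simp [T, dF, Fb_zero, Fb_one]
  | succ l ih =>
    have hT : T (l + 1) = T l + cs * S (l + 1) := by simp [T, Finset.sum_range_succ]
    rw [hT, ih, dF_rec, ← (cs_Fb l).1]
    have hc := cs_eq
    simp only [pow_succ] at *
    linear_combination cs ^ l * dF (l + 1) * hc

end TB

namespace TB

local notation "X" => (PowerSeries.X : PowerSeries ℚ)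

/-- `N.choose (m - 1)`, zero at `m = 0` -/
def cm (N : ℕ) : ℕ → ℕ
  | 0 => 0
  | m + 1 => N.choose m

lemma cm_succ (N m : ℕ) : cm (N + 1) (m + 1) = cm N (m + 1) + cm N m := by
  cases m with
  | zero => simp [cm]
  | succ m => simp [cm, Nat.choose_succ_succ, add_comm]

lemma coeff_zero_cs : PowerSeries.coeff 0 cs = 1 := by
  simp [cs, gf]

lemma cs_pow_rec (r : ℕ) : cs ^ (r + 1) = cs ^ r + X * cs ^ (r + 2) := by
  have h := cs_eq
  linear_combination cs ^ r * h

lemma coeff_cs_aux (m : ℕ) : ∀ r : ℕ, PowerSeries.coeff m (cs ^ (r + 1)) =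
    ((2 * m + r).choose m : ℚ) - cm (2 * m + r) m := by
  induction m with
  | zero =>
    intro r
    have := coeff_zero_cs
    simp only [PowerSeries.coeff_zero_eq_constantCoeff] at this
    simp [this, cm]
  | succ m ihm =>
    intro r
    induction r with
    | zero =>
      rw [cs_pow_rec, map_add, PowerSeries.coeff_succ_X_mul, ihm]
      have e : (2 * m + 1).choose (m + 1) = (2 * m + 1).choose m := by
        rw [← Nat.choose_symm_of_eq_add]; omega
      rw [show 2 * (m + 1) + 0 = (2 * m + 1) + 1 by ring, cm_succ, Nat.choose_succ_succ]
      simp only [Nat.succ_eq_add_one, e, cm]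
      simp [PowerSeries.coeff_one]
    | succ r ihr =>
      rw [cs_pow_rec, map_add, PowerSeries.coeff_succ_X_mul, ihm, ihr]
      rw [show 2 * (m + 1) + (r + 1) = (2 * m + r + 2) + 1 by ring, cm_succ, Nat.choose_succ_succ,
        show 2 * (m + 1) + r = 2 * m + r + 2 by ring, show 2 * m + (r + 1 + 1) = 2 * m + r + 2 by ring]
      push_cast
      simp only [Nat.succ_eq_add_one]
      ring

lemma coeff_cs (m r : ℕ) : PowerSeries.coeff m (cs ^ (r + 1)) =
    ((r + 1 : ℚ) / (m + r + 1)) * ((2 * m + r).choose m : ℚ) := by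
  rw [coeff_cs_aux]
  have hpos : (m + r + 1 : ℚ) ≠ 0 := by positivity
  cases m with
  | zero =>
    simp only [cm, Nat.choose_zero_right]
    push_cast at hpos ⊢
    field_simp
    ring
  | succ m =>
    have h := Nat.choose_succ_right_eq (2 * (m + 1) + r) m
    rw [show 2 * (m + 1) + r - m = m + r + 2 by omega] at h
    have h' : ((2 * (m + 1) + r).choose (m + 1) : ℚ) * (m + 1)
      = (2 * (m + 1) + r).choose m * (m + r + 2) := by exact_mod_cast h
    simp only [cm]
    push_cast at hpos ⊢
    field_simp
    linear_combination h'

lemma coeff_X_cs (n d r : ℕ) (hd : 2 * d ≤ 2 * n + r) :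
    PowerSeries.coeff n (X ^ d * cs ^ (r + 1)) =
      ((r + 1 : ℚ) / ((n : ℚ) - d + r + 1)) * ch (2 * n + r - 2 * d) ((n : ℤ) - d) := by
  rw [PowerSeries.coeff_X_pow_mul']
  unfold ch
  split_ifs with h1 h2 h2
  · rw [coeff_cs, Nat.cast_sub h1, show 2 * (n - d) + r = 2 * n + r - 2 * d by omega,
      show ((n : ℤ) - d).toNat = n - d by omega]
  · omega
  · omega
  · simp

lemma dF_eq (l : ℕ) : dF l = ∑ k ∈ Finset.Icc 1 (l / 2),
    PowerSeries.C ((-1 : ℚ) ^ k * k * ((l - k).choose k : ℚ)) * X ^ (k - 1) := by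
  ext j
  simp only [dF, map_sum, PowerSeries.coeff_C_mul, PowerSeries.coeff_X_pow,
    PowerSeries.coeff_derivative, Fb, PowerSeries.coeff_mk]
  by_cases hj : j + 1 ≤ l / 2
  · rw [Finset.sum_eq_single (j + 1)]
    · simp
      ring
    · intro b hb hne
      rw [Finset.mem_Icc] at hb
      rw [if_neg (by omega), mul_zero]
    · intro hn
      exact absurd (Finset.mem_Icc.mpr ⟨by omega, hj⟩) hn
  · rw [Finset.sum_eq_zero]
    · rw [Nat.choose_eq_zero_of_lt (by omega)]
      simp
    · intro b hb
      rw [Finset.mem_Icc] at hb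
      rw [if_neg (by omega), mul_zero]

lemma gf_bt_final (l : ℕ) : gf (fun t => bt t l) =
    (∑ k ∈ Finset.Icc 1 ((l + 1) / 2),
      PowerSeries.C ((-1 : ℚ) ^ (k - 1) * k * ((l - k + 1).choose k : ℚ)) *
        (X ^ (l + k - 1) * cs ^ (3 * l + 1)))
    - ∑ k ∈ Finset.Icc 1 (l / 2),
      PowerSeries.C ((-1 : ℚ) ^ (k - 1) * k * ((l - k).choose k : ℚ)) *
        (X ^ (l + k) * cs ^ (3 * l + 1 + 1)) := by
  have e : gf (fun t => bt t l) = X ^ l * cs ^ (3 * l + 1) * (- dF (l + 1))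
      - X ^ (l + 1) * cs ^ (3 * l + 1 + 1) * (- dF l) := by
    rw [gf_bt, T_eq]
    rw [show 3 * l = l + l + l by ring, mul_pow, ← pow_mul, show 2 * l = l + l by ring]
    simp only [pow_add]
    ring
  rw [e, dF_eq, dF_eq, ← Finset.sum_neg_distrib, ← Finset.sum_neg_distrib, Finset.mul_sum,
    Finset.mul_sum]
  congr 1
  · refine Finset.sum_congr rfl fun k hk => ?_
    rw [Finset.mem_Icc] at hk
    obtain ⟨j, rfl⟩ : ∃ j, k = j + 1 := ⟨k - 1, by omega⟩
    rw [show l + 1 - (j + 1) = l - (j + 1) + 1 by omega, show l + (j + 1) - 1 = l + j by omega,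
      show j + 1 - 1 = j by omega]
    rw [pow_succ (-1), pow_add X]
    simp only [map_mul, map_neg, mul_neg, neg_mul, mul_one]
    ring
  · refine Finset.sum_congr rfl fun k hk => ?_
    rw [Finset.mem_Icc] at hk
    obtain ⟨j, rfl⟩ : ∃ j, k = j + 1 := ⟨k - 1, by omega⟩
    rw [show j + 1 - 1 = j by omega]
    rw [pow_succ (-1), pow_add X, pow_add X, pow_add X]
    simp only [map_mul, map_neg, mul_neg, neg_mul, mul_one]
    ring

lemma sum_bt (n l : ℕ) (h : l ≤ n) : ∑ t ∈ BinaryTree.treesOfNumNodesEq n, bt t l =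
      (∑ k ∈ Finset.Icc 1 ((l + 1) / 2),
        (-1 : ℚ) ^ (k - 1) * k * Nat.choose (l - k + 1) k *
          ((3 * l + 1 : ℚ) / (n + 2 * l + 2 - k)) *
          ch (2 * n + l + 2 - 2 * k) ((n : ℤ) - l - k + 1))
      - ∑ k ∈ Finset.Icc 1 (l / 2),
        (-1 : ℚ) ^ (k - 1) * k * Nat.choose (l - k) k *
          ((3 * l + 2 : ℚ) / (n + 2 * l + 2 - k)) *
          ch (2 * n + l + 1 - 2 * k) ((n : ℤ) - l - k) := by
  have e : ∑ t ∈ BinaryTree.treesOfNumNodesEq n, bt t l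
      = PowerSeries.coeff n (gf (fun t => bt t l)) := by simp [gf]
  rw [e, gf_bt_final, map_sub, map_sum, map_sum]
  congr 1
  · refine Finset.sum_congr rfl fun k hk => ?_
    rw [Finset.mem_Icc] at hk
    obtain ⟨j, rfl⟩ : ∃ j, k = j + 1 := ⟨k - 1, by omega⟩
    rw [PowerSeries.coeff_C_mul, coeff_X_cs _ _ _ (by omega), ← mul_assoc]
    rw [show l + (j + 1) - 1 = l + j by omega]
    congr 1
    · congr 1
      congr 1
      · push_cast; ring
      · push_cast; ring
    · congr 1
      · omega
      · push_cast; ring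
  · refine Finset.sum_congr rfl fun k hk => ?_
    rw [Finset.mem_Icc] at hk
    rw [PowerSeries.coeff_C_mul, coeff_X_cs _ _ _ (by omega), ← mul_assoc]
    congr 1
    · congr 1
      congr 1
      · push_cast; ring
      · push_cast; ring
    · congr 1
      · omega
      · push_cast; ring

end TB

namespace TB

open DyckStep

def st : Bool → DyckStep
  | true => U
  | false => D

def enc {m : ℕ} (w : Fin m → Bool) : List DyckStep := List.ofFn fun i => st (w i)

def ht (l : List DyckStep) : ℤ := (l.count U : ℤ) - l.count D

def cnt : List DyckStep → ℤ → ℕ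
  | [], _ => 0
  | U :: l, k => (if k = 1 then 1 else 0) + cnt l (k - 1)
  | D :: l, k => cnt l (k + 1)

lemma ht_cons_U (l : List DyckStep) : ht (U :: l) = 1 + ht l := by
  simp [ht]; ring

lemma ht_cons_D (l : List DyckStep) : ht (D :: l) = -1 + ht l := by
  simp [ht]; ring

lemma cnt_append (l₁ l₂ : List DyckStep) (k : ℤ) :
    cnt (l₁ ++ l₂) k = cnt l₁ k + cnt l₂ (k - ht l₁) := by
  induction l₁ generalizing k with
  | nil => simp [cnt, ht]
  | cons s l ih =>
    cases s with
    | U => 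
      rw [List.cons_append, cnt, cnt, ih, ht_cons_U, add_assoc, sub_sub]
    | D =>
      rw [List.cons_append, cnt, cnt, ih, ht_cons_D]
      congr 2
      ring

lemma ht_dyck (p : DyckWord) : ht p.toList = 0 := by
  simp [ht, p.count_U_eq_count_D]

lemma cnt_node (p q : DyckWord) (k : ℤ) : cnt (p.nest + q).toList k =
    (if k = 1 then 1 else 0) + cnt p.toList (k - 1) + cnt q.toList k := by
  have e : (p.nest + q).toList = U :: (p.toList ++ (D :: q.toList)) := by
    change ([U] ++ p.toList ++ [D]) ++ q.toList = _
    simp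
  rw [e, cnt, cnt_append, ht_dyck, cnt]
  simp [add_assoc]

lemma cnt_nonpos (t : BinaryTree Unit) : ∀ k : ℤ, k ≤ 0 → cnt (DyckWord.ofTree t).toList k = 0 := by
  induction t with
  | nil => intro k _; rfl
  | node u a b iha ihb =>
    intro k hk
    rw [DyckWord.ofTree, cnt_node, iha _ (by omega), ihb _ hk, if_neg (by omega)]

lemma cnt_pos (t : BinaryTree Unit) : ∀ k : ℕ,
    cnt (DyckWord.ofTree t).toList ((k : ℤ) + 1) = lv t (k + 1) := by
  induction t with
  | nil => intro k; rfl
  | node u a b iha ihb =>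
    intro k
    rw [DyckWord.ofTree, cnt_node, ihb, lv]
    congr 1
    cases k with
    | zero => simp [lv_zero, cnt_nonpos]
    | succ k =>
      rw [if_neg (by omega), zero_add, ← iha]
      congr 1
      push_cast
      ring

lemma heightAt_zero (m : ℕ) (w : Fin m → Bool) : heightAt m w 0 = 0 := by
  simp [heightAt]

lemma heightAt_succ (m : ℕ) (w : Fin (m + 1) → Bool) (k : ℕ) :
    heightAt (m + 1) w (k + 1) =
      (if w 0 = true then 1 else -1) + heightAt m (fun i => w i.succ) k := by
  simp only [heightAt, Finset.card_filter, Fin.sum_univ_succ]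
  cases h : w 0 <;> simp [h] <;> ring

lemma enc_succ {m : ℕ} (w : Fin (m + 1) → Bool) :
    enc w = st (w 0) :: enc (fun i => w i.succ) := by
  simp [enc, List.ofFn_succ]

lemma heightAt_eq (m : ℕ) (w : Fin m → Bool) (k : ℕ) :
    heightAt m w k = ht ((enc w).take k) := by
  induction m generalizing k with
  | zero => simp [heightAt, enc, ht]
  | succ m ih =>
    cases k with
    | zero => simp [heightAt_zero, ht]
    | succ k =>
      rw [heightAt_succ, enc_succ, ih]
      cases h : w 0
      · simp [st, ht_cons_D]
      · simp [st, ht_cons_U]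

lemma cnt_eq (m : ℕ) (w : Fin m → Bool) (k : ℤ) :
    (Finset.univ.filter fun i : Fin m => w i = true ∧ heightAt m w ((i : ℕ) + 1) = k).card
      = cnt (enc w) k := by
  induction m generalizing k with
  | zero => simp [enc, cnt]
  | succ m ih =>
    rw [enc_succ]
    rw [Finset.card_filter, Fin.sum_univ_succ]
    simp only [heightAt_succ, Fin.val_succ, Fin.val_zero, heightAt_zero]
    rw [← Finset.card_filter]
    cases h : w 0
    · rw [st, cnt, ← ih]
      simp only [Bool.false_eq_true, false_and, if_false, zero_add]
      congr 1
      ext i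
      simp only [Finset.mem_filter, Finset.mem_univ, true_and]
      refine and_congr_right fun _ => ?_
      constructor <;> intro h <;> linarith
    · rw [st, cnt, ← ih]
      simp only [if_true, true_and, add_zero]
      congr 1
      · simp [eq_comm]
      congr 1
      ext i
      simp only [Finset.mem_filter, Finset.mem_univ, true_and]
      refine and_congr_right fun _ => ?_
      constructor <;> intro h <;> linarith

lemma count_enc (m : ℕ) (w : Fin m → Bool) :
    (enc w).count U = (Finset.univ.filter fun i : Fin m => w i = true).card := by
  induction m with
  | zero => simp [enc]
  | succ m ih =>
    rw [enc_succ, Finset.card_filter, Fin.sum_univ_succ, ← Finset.card_filter, List.count_cons, ih]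
    cases h : w 0 <;> simp [st, add_comm]

lemma count_add (l : List DyckStep) : l.count U + l.count D = l.length := by
  induction l with
  | nil => rfl
  | cons s l ih => cases s <;> simp <;> omega

lemma enc_length {m : ℕ} (w : Fin m → Bool) : (enc w).length = m := by simp [enc]

/-- Dyck word from an encoded one -/
def toD (n : ℕ) (w : Fin (2 * n) → Bool) (h : IsDyck n w) : DyckWord where
  toList := enc w
  count_U_eq_count_D := by
    have h1 := count_enc _ w
    have h2 := count_add (enc w)
    rw [enc_length] at h2
    have h3 := h.1
    simp only [Finset.card_filter] at h1 h3
    omega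
  count_D_le_count_U i := by
    rcases le_or_gt i (2 * n) with hi | hi
    · have := h.2 i hi
      rw [heightAt_eq, ht] at this
      omega
    · have := h.2 (2 * n) le_rfl
      rw [heightAt_eq, ht, List.take_of_length_le (by simp [enc])] at this
      rw [List.take_of_length_le (by rw [enc_length]; omega)]
      omega

lemma st_inj : Function.Injective st := by
  intro a b h
  cases a <;> cases b <;> simp_all [st]

lemma enc_inj {m : ℕ} : Function.Injective (enc (m := m)) := by
  intro a b h
  have := List.ofFn_injective h
  funext i
  exact st_inj (congrFun this i)

lemma toD_semilength (n : ℕ) (w : Fin (2 * n) → Bool) (h : IsDyck n w) :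
    (toD n w h).semilength = n := by
  have h1 := (toD n w h).two_mul_semilength_eq_length
  have h2 : (toD n w h).toList.length = 2 * n := enc_length w
  omega

lemma toD_surj (n : ℕ) (p : DyckWord) (hp : p.semilength = n) :
    ∃ w, ∃ h : IsDyck n w, toD n w h = p := by
  have hl : p.toList.length = 2 * n := by
    rw [← p.two_mul_semilength_eq_length, hp]
  let w : Fin (2 * n) → Bool := fun i => decide (p.toList[(i : ℕ)]'(by rw [hl]; exact i.2) = U)
  have he : enc w = p.toList := by
    apply List.ext_getElem
    · rw [enc_length, hl]
    · intro i h1 h2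
      simp only [enc, List.getElem_ofFn, w]
      cases p.toList[i] <;> simp [st]
  refine ⟨w, ⟨?_, ?_⟩, ?_⟩
  · have := count_enc _ w
    rw [he] at this
    exact this.symm.trans hp
  · intro k _
    rw [heightAt_eq, he, ht]
    have := p.count_D_le_count_U k
    omega
  · exact DyckWord.ext he

lemma sum_lt_card {m : ℕ} (s : Finset (Fin m)) :
    (∑ i ∈ s, ((s.filter fun j : Fin _ => (j : ℕ) < (i : ℕ)).card : ℚ)) = s.card * (s.card - 1) / 2 := by
  induction s using Finset.induction_on_max with
  | empty => simp
  | insert a s hs ih =>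
    have ha : a ∉ s := fun h => lt_irrefl _ (hs a h)
    rw [Finset.sum_insert ha, Finset.card_insert_of_notMem ha]
    have e1 : (insert a s).filter (fun j : Fin m => (j : ℕ) < (a : ℕ)) = s := by
      ext j
      simp only [Finset.mem_filter, Finset.mem_insert]
      constructor
      · rintro ⟨rfl | h, h2⟩
        · omega
        · exact h
      · intro h
        exact ⟨Or.inr h, hs j h⟩
    have e2 : ∀ i ∈ s, (insert a s).filter (fun j : Fin m => (j : ℕ) < (i : ℕ))
        = s.filter (fun j : Fin m => (j : ℕ) < (i : ℕ)) := by
      intro i hi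
      have hai : ¬ ((a : ℕ) < i) := by
        have := hs i hi
        rw [Fin.lt_def] at this
        omega
      rw [Finset.filter_insert, if_neg hai]
    rw [e1, Finset.sum_congr rfl (fun i hi => by rw [e2 i hi]), ih]
    push_cast
    ring

lemma word_sum (n ℓ : ℕ) (w : Fin (2 * n) → Bool) (t : BinaryTree Unit)
    (ht : (DyckWord.ofTree t).toList = enc w) :
    ((∑ v ∈ nodesAtLevel n w ℓ, bfsScore n w v : ℕ) : ℚ) = bt t ℓ := by
  have hneg : ∀ k : ℤ, k ≤ 0 → ∀ i, w i = true → heightAt (2 * n) w ((i : ℕ) + 1) ≠ k := by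
    intro k hk i hi he
    have h1 := cnt_nonpos t k hk
    rw [ht, ← cnt_eq, Finset.card_eq_zero] at h1
    have : i ∈ (∅ : Finset (Fin (2 * n))) := by
      rw [← h1]; simp [hi, he]
    simp at this
  cases ℓ with
  | zero =>
    have e : bt t 0 = 0 := by simp [bt, lv_zero, low]
    rw [e, Nat.cast_eq_zero]
    apply Finset.sum_eq_zero
    intro v hv
    cases v with
    | none => rfl
    | some i =>
      have hv := Finset.mem_filter.mp hv
      exact absurd hv.2.2 (hneg _ le_rfl i hv.2.1)
  | succ l =>
    set s := Finset.univ.filter fun i : Fin (2 * n) =>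
      w i = true ∧ heightAt (2 * n) w ((i : ℕ) + 1) = ((l + 1 : ℕ) : ℤ) with hs
    have hscard : s.card = lv t (l + 1) := by
      rw [hs, cnt_eq, ← ht, ← cnt_pos]; push_cast; rfl
    have e1 : nodesAtLevel n w (l + 1) = s.map Function.Embedding.some := by
      ext v
      cases v with
      | none => 
        simp [nodesAtLevel, isNode, nodeLevel]
        omega
      | some i => simp [nodesAtLevel, isNode, nodeLevel, hs]
    have hlow : (Finset.univ.filter fun j : Fin (2 * n) => w j = true ∧
        heightAt (2 * n) w ((j : ℕ) + 1) < ((l + 1 : ℕ) : ℤ)).card + 1 = low t (l + 1) := by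
      rw [low, Finset.sum_range_succ', lv_zero]
      congr 1
      rw [Finset.card_eq_sum_card_fiberwise (t := Finset.range l)
        (f := fun j : Fin (2 * n) => (heightAt (2 * n) w ((j : ℕ) + 1)).toNat - 1)]
      · refine Finset.sum_congr rfl fun d hd => ?_
        rw [← cnt_pos, ht, ← cnt_eq, Finset.filter_filter]
        congr 1
        ext j
        rw [Finset.mem_range] at hd
        simp only [Finset.mem_filter, Finset.mem_univ, true_and, and_assoc]
        refine and_congr_right fun hj => ?_
        have h0 : 0 < heightAt (2 * n) w ((j : ℕ) + 1) := by
          by_contra hk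
          exact hneg _ (not_lt.mp hk) j hj rfl
        constructor
        · rintro ⟨h1, h2⟩
          omega
        · intro h; omega
      · intro j hj
        simp only [Finset.coe_filter, Finset.mem_univ, true_and, Set.mem_ofPred_eq] at hj
        simp only [Finset.coe_range, Set.mem_Iio]
        have h0 : 0 < heightAt (2 * n) w ((j : ℕ) + 1) := by
          by_contra hk
          exact hneg _ (not_lt.mp hk) j hj.1 rfl
        omega
    have e2 : ∀ i ∈ s, bfsScore n w (some i) = low t (l + 1)
        + (s.filter fun j : Fin _ => (j : ℕ) < (i : ℕ)).card := by
      intro i hi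
      rw [hs, Finset.mem_filter] at hi
      rw [← hlow]
      have key : bfsScore n w (some i) = 1 + ((Finset.univ.filter fun j : Fin (2 * n) =>
          w j = true ∧ heightAt (2 * n) w ((j : ℕ) + 1) < ((l + 1 : ℕ) : ℤ)) ∪
          (Finset.univ.filter fun j : Fin (2 * n) => (w j = true ∧
          heightAt (2 * n) w ((j : ℕ) + 1) = ((l + 1 : ℕ) : ℤ)) ∧ (j : ℕ) < (i : ℕ))).card := by
        rw [bfsScore]
        congr 2
        ext j
        simp only [Finset.mem_union, Finset.mem_filter, Finset.mem_univ, true_and, nodeLevel,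
          hi.2.2]
        tauto
      rw [key, Finset.card_union_of_disjoint, hs, Finset.filter_filter]
      · ring
      · rw [Finset.disjoint_filter]
        rintro j _ ⟨_, h1⟩ ⟨⟨_, h2⟩, _⟩
        omega
    rw [e1, Finset.sum_map]
    simp only [Function.Embedding.some_apply]
    rw [Finset.sum_congr rfl e2]
    push_cast
    rw [Finset.sum_add_distrib, sum_lt_card, Finset.sum_const, hscard, bt, nsmul_eq_mul]

lemma totalB_eq (n ℓ : ℕ) :
    (totalB n ℓ : ℚ) = ∑ t ∈ BinaryTree.treesOfNumNodesEq n, bt t ℓ := by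
  unfold totalB
  rw [Nat.cast_sum]
  have hd : ∀ w, w ∈ dyckWords n → IsDyck n w := fun w hw => (Finset.mem_filter.mp hw).2
  refine Finset.sum_bij (fun w hw => (toD n w (hd w hw)).toTree) ?_ ?_ ?_ ?_
  · intro w hw
    rw [BinaryTree.mem_treesOfNumNodesEq, DyckWord.numNodes_toTree, toD_semilength]
  · intro w hw w' hw' h
    have h1 := congrArg DyckWord.ofTree h
    rw [DyckWord.ofTree_toTree, DyckWord.ofTree_toTree] at h1
    exact enc_inj (congrArg DyckWord.toList h1)
  · intro t ht
    rw [BinaryTree.mem_treesOfNumNodesEq] at ht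
    obtain ⟨w, h, hp⟩ := toD_surj n (DyckWord.ofTree t) (by
      rw [← DyckWord.numNodes_toTree, DyckWord.toTree_ofTree, ht])
    refine ⟨w, Finset.mem_filter.mpr ⟨Finset.mem_univ _, h⟩, ?_⟩
    rw [hp, DyckWord.toTree_ofTree]
  · intro w hw
    apply word_sum
    rw [DyckWord.ofTree_toTree]
    rfl

end TB

/-- Alternative alternating-sum formula for totalB(n,ℓ). -/
theorem totalB_alt (n ℓ : ℕ) (h : ℓ ≤ n) :
    (totalB n ℓ : ℚ) =
      (∑ k ∈ Finset.Icc 1 ((ℓ + 1) / 2),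
        (-1 : ℚ) ^ (k - 1) * k * Nat.choose (ℓ - k + 1) k *
          ((3 * ℓ + 1 : ℚ) / (n + 2 * ℓ + 2 - k)) *
          ch (2 * n + ℓ + 2 - 2 * k) ((n : ℤ) - ℓ - k + 1))
      - ∑ k ∈ Finset.Icc 1 (ℓ / 2),
        (-1 : ℚ) ^ (k - 1) * k * Nat.choose (ℓ - k) k *
          ((3 * ℓ + 2 : ℚ) / (n + 2 * ℓ + 2 - k)) *
          ch (2 * n + ℓ + 1 - 2 * k) ((n : ℤ) - ℓ - k) := by
  rw [TB.totalB_eq, TB.sum_bt n ℓ h]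
end

section
/- The two closed forms for totalB agree: for all n ≥ 0 and 0 ≤ ℓ ≤ n, (n(2ℓ+1)/(n+ℓ+1))·C(2n, n-ℓ) − C(2n, n-2ℓ-1) − 2∑_{j=ℓ+1}^{2ℓ} C(2n, n-j) = ∑_{k=1}^{⌊(ℓ+1)/2⌋} (−1)^{k−1} k·C(ℓ−k+1,k)·((3ℓ+1)/(n−k+2ℓ+2))·C(2n−2k+ℓ+2, n−ℓ−k+1) − ∑_{k=1}^{⌊ℓ/2⌋} (−1)^{k−1} k·C(ℓ−k,k)·((3ℓ+2)/(n−k+2ℓ+2))·C(2n−2k+ℓ+1, n−ℓ−k). -/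
open Polynomial in
lemma coeff_shift (N a n : ℕ) : ((X : ℚ[X]) ^ a * (1 + X) ^ N).coeff n = ch N ((n : ℤ) - a) := by
  rw [coeff_X_pow_mul', ch]
  by_cases h : a ≤ n
  · have h2 : (0 : ℤ) ≤ (n : ℤ) - a := by omega
    have h3 : ((n : ℤ) - a).toNat = n - a := by omega
    rw [if_pos h, if_pos h2, h3, coeff_one_add_X_pow]
  · have h2 : ¬ (0 : ℤ) ≤ (n : ℤ) - a := by omega
    rw [if_neg h, if_neg h2]

lemma ch_step (N : ℕ) (m : ℤ) : ch N (m - 1) * ((N : ℚ) - m + 1) = ch N m * m := by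
  rcases lt_trichotomy m 0 with h | h | h
  · simp only [ch, if_neg (show ¬ (0 : ℤ) ≤ m - 1 by omega),
      if_neg (show ¬ (0 : ℤ) ≤ m by omega)]
    simp
  · subst h; simp [ch]
  · obtain ⟨p, rfl⟩ : ∃ p : ℕ, m = p + 1 := ⟨(m - 1).toNat, by omega⟩
    have e : ((p : ℤ) + 1).toNat = p + 1 := by omega
    have e2 : (0 : ℤ) ≤ (p : ℤ) + 1 := by omega
    simp only [ch, add_sub_cancel_right, e, e2, if_true, Int.toNat_natCast, Int.natCast_nonneg]
    rcases le_or_gt p N with hp | hp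
    · have := Nat.choose_succ_right_eq N p
      have h2 : ((N.choose (p + 1) * (p + 1) : ℕ) : ℚ) = ((N.choose p * (N - p) : ℕ) : ℚ) := by
        rw [this]
      push_cast [Nat.cast_sub hp] at h2 ⊢
      linarith
    · rw [Nat.choose_eq_zero_of_lt hp, Nat.choose_eq_zero_of_lt (by omega : N < p + 1)]; simp

lemma ch_succ (N : ℕ) (m : ℤ) : ch (N + 1) m = ch N m + ch N (m - 1) := by
  rcases lt_trichotomy m 0 with h | h | h
  · simp only [ch, if_neg (show ¬ (0 : ℤ) ≤ m - 1 by omega),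
      if_neg (show ¬ (0 : ℤ) ≤ m by omega)]
    simp
  · subst h; simp [ch]
  · obtain ⟨p, rfl⟩ : ∃ p : ℕ, m = p + 1 := ⟨(m - 1).toNat, by omega⟩
    have e : ((p : ℤ) + 1).toNat = p + 1 := by omega
    have e2 : (0 : ℤ) ≤ (p : ℤ) + 1 := by omega
    simp only [ch, add_sub_cancel_right, e, e2, if_true, Int.toNat_natCast, Int.natCast_nonneg]
    rw [Nat.choose_succ_succ]; push_cast; ring

open Polynomial in
lemma ballot (N a n : ℕ) (m : ℤ) (hm : m = (n : ℤ) - a) (A B : ℚ) (hA : A = N - 2 * m + 1)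
    (hB : B = N - m + 1) (hB0 : B ≠ 0) :
    A / B * ch N m = ((1 - X) * ((X : ℚ[X]) ^ a * (1 + X) ^ N)).coeff n := by
  have e : (1 - X) * ((X : ℚ[X]) ^ a * (1 + X) ^ N) =
      X ^ a * (1 + X) ^ N - X ^ (a + 1) * (1 + X) ^ N := by ring
  rw [e, coeff_sub, coeff_shift, coeff_shift]
  have e2 : (n : ℤ) - ((a + 1 : ℕ) : ℤ) = m - 1 := by push_cast; omega
  rw [e2, ← hm]
  have := ch_step N m
  rw [← hB] at this
  field_simp
  rw [hA]
  linear_combination this + ch N m * (-1) * hB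

section
variable {R : Type*} [CommRing R]

def uT (s z : R) (l k : ℕ) : R := (-1) ^ k * ((l - k).choose k : R) * z ^ k * s ^ (l - 2 * k)

def gT (s z : R) (l k : ℕ) : R :=
  (-1) ^ k * ((k : R) + 1) * ((l - (k + 1)).choose (k + 1) : R) * z ^ k * s ^ (l - 2 * (k + 1))

def uS (s z : R) (l : ℕ) : R := ∑ k ∈ Finset.range (l + 1), uT s z l k

def gS (s z : R) (l : ℕ) : R := ∑ k ∈ Finset.range (l + 1), gT s z l k

lemma uT_zero (s z : R) (l k : ℕ) (h : l < 2 * k) : uT s z l k = 0 := by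
  simp [uT, Nat.choose_eq_zero_of_lt (by omega : l - k < k)]

lemma gT_zero (s z : R) (l k : ℕ) (h : l < 2 * (k + 1)) : gT s z l k = 0 := by
  simp [gT, Nat.choose_eq_zero_of_lt (by omega : l - (k + 1) < k + 1)]

lemma uS_eq (s z : R) (l M : ℕ) (h : l < 2 * M) : ∑ k ∈ Finset.range M, uT s z l k = uS s z l := by
  unfold uS
  rcases le_total M (l + 1) with hM | hM
  · apply Finset.sum_subset (Finset.range_mono hM)
    intro k _ hk
    rw [Finset.mem_range] at hk
    exact uT_zero _ _ _ _ (by omega)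
  · symm
    apply Finset.sum_subset (Finset.range_mono hM)
    intro k _ hk
    rw [Finset.mem_range] at hk
    exact uT_zero _ _ _ _ (by omega)

lemma gS_eq (s z : R) (l M : ℕ) (h : l < 2 * (M + 1)) :
    ∑ k ∈ Finset.range M, gT s z l k = gS s z l := by
  unfold gS
  rcases le_total M (l + 1) with hM | hM
  · apply Finset.sum_subset (Finset.range_mono hM)
    intro k _ hk
    rw [Finset.mem_range] at hk
    exact gT_zero _ _ _ _ (by omega)
  · symm
    apply Finset.sum_subset (Finset.range_mono hM)
    intro k _ hk
    rw [Finset.mem_range] at hk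
    exact gT_zero _ _ _ _ (by omega)

lemma uT_rec (s z : R) (l k : ℕ) :
    uT s z (l + 2) (k + 1) = s * uT s z (l + 1) (k + 1) - z * uT s z l k := by
  rcases lt_or_ge l (2 * k) with h | h
  · rw [uT_zero _ _ _ _ (by omega), uT_zero _ _ _ _ (by omega), uT_zero _ _ _ _ h]; simp
  obtain ⟨d, rfl⟩ := Nat.exists_eq_add_of_le h
  unfold uT
  rw [show 2 * k + d + 2 - (k + 1) = k + d + 1 by omega,
    show 2 * k + d + 2 - 2 * (k + 1) = d by omega,
    show 2 * k + d + 1 - (k + 1) = k + d by omega,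
    show 2 * k + d + 1 - 2 * (k + 1) = d - 1 by omega,
    show 2 * k + d - k = k + d by omega, show 2 * k + d - 2 * k = d by omega,
    Nat.choose_succ_succ]
  rcases d with _ | d
  · rw [Nat.choose_eq_zero_of_lt (by omega : k + 0 < k + 1)]; push_cast; ring
  · rw [Nat.add_sub_cancel]; push_cast; ring

lemma gT_rec (s z : R) (l k : ℕ) :
    gT s z (l + 2) (k + 1) = s * gT s z (l + 1) (k + 1) + uT s z l (k + 1) - z * gT s z l k := by
  rcases lt_or_ge l (2 * (k + 1)) with h | h
  · rw [gT_zero _ _ _ _ (by omega), gT_zero _ _ _ _ (by omega), uT_zero _ _ _ _ h,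
      gT_zero _ _ _ _ h]; simp
  obtain ⟨d, rfl⟩ := Nat.exists_eq_add_of_le h
  unfold uT gT
  rw [show 2 * (k + 1) + d + 2 - (k + 1 + 1) = k + d + 1 + 1 by omega,
    show 2 * (k + 1) + d + 2 - 2 * (k + 1 + 1) = d by omega,
    show 2 * (k + 1) + d + 1 - (k + 1 + 1) = k + d + 1 by omega,
    show 2 * (k + 1) + d + 1 - 2 * (k + 1 + 1) = d - 1 by omega,
    show 2 * (k + 1) + d - (k + 1) = k + d + 1 by omega,
    show 2 * (k + 1) + d - 2 * (k + 1) = d by omega,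
    Nat.choose_succ_succ (k + d + 1) (k + 1)]
  rcases d with _ | d
  · rw [Nat.choose_eq_zero_of_lt (by omega : k + 0 + 1 < k + 1 + 1)]; push_cast; ring
  · rw [Nat.add_sub_cancel]; push_cast; ring

lemma uS_rec (s z : R) (l : ℕ) : uS s z (l + 2) = s * uS s z (l + 1) - z * uS s z l := by
  rw [← uS_eq s z (l + 2) (l + 1 + 1) (by omega), ← uS_eq s z (l + 1) (l + 1 + 1) (by omega),
    ← uS_eq s z l (l + 1) (by omega), Finset.sum_range_succ' (uT s z (l + 2)), Finset.sum_range_succ' (uT s z (l + 1))]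
  simp only [uT_rec, Finset.sum_sub_distrib, ← Finset.mul_sum]
  have : uT s z (l + 2) 0 = s * uT s z (l + 1) 0 := by simp [uT]; ring
  rw [this]; ring

lemma gS_rec (s z : R) (l : ℕ) :
    gS s z (l + 2) = s * gS s z (l + 1) + uS s z l - z * gS s z l := by
  rw [← gS_eq s z (l + 2) (l + 1 + 1) (by omega), ← gS_eq s z (l + 1) (l + 1 + 1) (by omega),
    ← gS_eq s z l (l + 1) (by omega), ← uS_eq s z l (l + 1 + 1) (by omega),
    Finset.sum_range_succ' (gT s z (l + 2)), Finset.sum_range_succ' (gT s z (l + 1)),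
    Finset.sum_range_succ' (uT s z l)]
  simp only [gT_rec, Finset.sum_sub_distrib, Finset.sum_add_distrib, ← Finset.mul_sum]
  have : gT s z (l + 2) 0 = s * gT s z (l + 1) 0 + uT s z l 0 := by
    rcases l with _ | l <;> simp [gT, uT]
    ring
  rw [this]; ring

lemma uS_closed (t : R) (l : ℕ) : (1 - t) * uS (1 + t) t l = 1 - t ^ (l + 1) := by
  induction l using Nat.twoStepInduction with
  | zero => simp [uS, uT]
  | one => simp [uS, uT, Finset.sum_range_succ]; ring
  | more l h1 h2 => rw [uS_rec]; linear_combination (1 + t) * h2 - t * h1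

lemma gS_closed (t : R) (l : ℕ) :
    (1 - t) * (gS (1 + t) t (l + 1) - t * gS (1 + t) t l) =
      l - ∑ j ∈ Finset.range l, t ^ (j + 1) := by
  induction l with
  | zero => simp [gS, gT, Finset.sum_range_succ]
  | succ l ih =>
    rw [Finset.sum_range_succ, gS_rec]
    push_cast
    linear_combination ih + uS_closed t l

lemma gS_Icc (s z : R) (l : ℕ) : ∑ k ∈ Finset.Icc 1 (l / 2),
    (-1) ^ (k - 1) * (k : R) * ((l - k).choose k : R) * z ^ (k - 1) * s ^ (l - 2 * k)
    = gS s z l := by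
  rw [← gS_eq s z l (l / 2) (by omega), Finset.range_eq_Ico,
    ← Finset.Ico_add_one_right_eq_Icc, ← Finset.sum_Ico_add' _ 0 (l / 2) 1]
  apply Finset.sum_congr rfl
  intro k _
  simp [gT]

end

open Polynomial in
lemma sum_term (n l L c e : ℕ) (A B : ℚ) (hL : L / 2 ≤ n)
    (hA : A = 3 * l + e) (hc : L + 1 + c = l + 2) (he : e = 1 + c) (hB : B = n + 2 * l + 2) 
    (hl : l ≤ n) :
    ∑ k ∈ Finset.Icc 1 (L / 2), (-1 : ℚ) ^ (k - 1) * k * Nat.choose (L - k) k *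
          (A / (B - k)) * ch (2 * n + (L + 1) - 2 * k) ((n : ℤ) - l - k + 1 - c) =
    ((1 - X) * (X ^ (l + c) * (1 + X) ^ (2 * n + 1)) * gS (1 + X) (X : ℚ[X]) L).coeff n := by
  rw [← gS_Icc, Finset.mul_sum, finsetSum_coeff]
  apply Finset.sum_congr rfl
  intro k hk
  rw [Finset.mem_Icc] at hk
  obtain ⟨p, rfl⟩ : ∃ p, k = p + 1 := ⟨k - 1, by omega⟩
  obtain ⟨d, rfl⟩ : ∃ d, L = 2 * (p + 1) + d := ⟨L - 2 * (p + 1), by omega⟩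
  have hlq : ((2 * (p + 1) + d + 1 + c : ℕ) : ℚ) = ((l + 2 : ℕ) : ℚ) := by rw [hc]
  have hp : (p : ℚ) + 1 ≤ n := by exact_mod_cast (by omega : p + 1 ≤ n)
  have hl0 : (0 : ℚ) ≤ l := by positivity
  push_cast at hlq
  rw [mul_assoc, ballot (2 * n + (2 * (p + 1) + d + 1) - 2 * (p + 1)) (l + c + p) n]
  · rw [show 2 * n + (2 * (p + 1) + d + 1) - 2 * (p + 1) = 2 * n + 1 + d by omega,
      show 2 * (p + 1) + d - 2 * (p + 1) = d by omega, ← coeff_C_mul]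
    congr 1
    simp only [map_mul, map_pow, map_neg, map_one, map_natCast, Nat.add_sub_cancel]
    ring
  · push_cast; ring
  · rw [show 2 * n + (2 * (p + 1) + d + 1) - 2 * (p + 1) = 2 * n + 1 + d by omega, hA, he]
    push_cast; linarith
  · rw [show 2 * n + (2 * (p + 1) + d + 1) - 2 * (p + 1) = 2 * n + 1 + d by omega, hB]
    push_cast; linarith
  · rw [hB]; push_cast; intro h0; linarith

open Polynomial in
/-- The two closed forms for totalB agree: for all n ≥ 0 and 0 ≤ ℓ ≤ n,
(n(2ℓ+1)/(n+ℓ+1))·C(2n, n−ℓ) − C(2n, n−2ℓ−1) − 2∑_{j=ℓ+1}^{2ℓ} C(2n, n−j)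
 = ∑_{k=1}^{⌊(ℓ+1)/2⌋} (−1)^{k−1} k·C(ℓ−k+1,k)·((3ℓ+1)/(n−k+2ℓ+2))·C(2n−2k+ℓ+2, n−ℓ−k+1)
 − ∑_{k=1}^{⌊ℓ/2⌋} (−1)^{k−1} k·C(ℓ−k,k)·((3ℓ+2)/(n−k+2ℓ+2))·C(2n−2k+ℓ+1, n−ℓ−k). -/
theorem totalB_closed_forms_agree (n ℓ : ℕ) (h : ℓ ≤ n) :
    ((n : ℚ) * (2 * ℓ + 1) / (n + ℓ + 1)) * Nat.choose (2 * n) (n - ℓ)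
        - ch (2 * n) ((n : ℤ) - 2 * ℓ - 1)
        - 2 * ∑ j ∈ Finset.Icc (ℓ + 1) (2 * ℓ), ch (2 * n) ((n : ℤ) - j) =
      (∑ k ∈ Finset.Icc 1 ((ℓ + 1) / 2),
        (-1 : ℚ) ^ (k - 1) * k * Nat.choose (ℓ - k + 1) k *
          ((3 * ℓ + 1 : ℚ) / (n + 2 * ℓ + 2 - k)) *
          ch (2 * n + ℓ + 2 - 2 * k) ((n : ℤ) - ℓ - k + 1))
      - ∑ k ∈ Finset.Icc 1 (ℓ / 2),
        (-1 : ℚ) ^ (k - 1) * k * Nat.choose (ℓ - k) k *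
          ((3 * ℓ + 2 : ℚ) / (n + 2 * ℓ + 2 - k)) *
          ch (2 * n + ℓ + 1 - 2 * k) ((n : ℤ) - ℓ - k) := by
  have s1 := sum_term n ℓ (ℓ + 1) 0 1 (3 * ℓ + 1) (n + 2 * ℓ + 2) (by omega) (by simp) (by omega)
    (by omega) rfl h
  have s2 := sum_term n ℓ ℓ 1 2 (3 * ℓ + 2) (n + 2 * ℓ + 2) (by omega) (by simp) (by omega)
    (by omega) rfl h
  have e1 : (∑ k ∈ Finset.Icc 1 ((ℓ + 1) / 2),
        (-1 : ℚ) ^ (k - 1) * k * Nat.choose (ℓ - k + 1) k *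
          ((3 * ℓ + 1 : ℚ) / (n + 2 * ℓ + 2 - k)) *
          ch (2 * n + ℓ + 2 - 2 * k) ((n : ℤ) - ℓ - k + 1)) =
      ((1 - X) * (X ^ (ℓ + 0) * (1 + X) ^ (2 * n + 1)) * gS (1 + X) (X : ℚ[X]) (ℓ + 1)).coeff n := by
    refine Eq.trans (Finset.sum_congr rfl fun k hk => ?_) s1
    rw [Finset.mem_Icc] at hk
    rw [show ℓ - k + 1 = ℓ + 1 - k by omega,
      show 2 * n + (ℓ + 1 + 1) = 2 * n + ℓ + 2 by omega]
    simp
  have e2 : (∑ k ∈ Finset.Icc 1 (ℓ / 2),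
        (-1 : ℚ) ^ (k - 1) * k * Nat.choose (ℓ - k) k *
          ((3 * ℓ + 2 : ℚ) / (n + 2 * ℓ + 2 - k)) *
          ch (2 * n + ℓ + 1 - 2 * k) ((n : ℤ) - ℓ - k)) =
      ((1 - X) * (X ^ (ℓ + 1) * (1 + X) ^ (2 * n + 1)) * gS (1 + X) (X : ℚ[X]) ℓ).coeff n := by
    refine Eq.trans (Finset.sum_congr rfl fun k hk => ?_) s2
    rw [show 2 * n + (ℓ + 1) = 2 * n + ℓ + 1 by omega]
    simp
  rw [e1, e2, ← coeff_sub]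
  have key : (1 - X) * (X ^ (ℓ + 0) * (1 + X) ^ (2 * n + 1)) * gS (1 + X) (X : ℚ[X]) (ℓ + 1)
      - (1 - X) * (X ^ (ℓ + 1) * (1 + X) ^ (2 * n + 1)) * gS (1 + X) (X : ℚ[X]) ℓ
      = C (ℓ : ℚ) * (X ^ ℓ * (1 + X) ^ (2 * n + 1))
        - ∑ j ∈ Finset.range ℓ, X ^ (ℓ + 1 + j) * (1 + X) ^ (2 * n + 1) := by
    have e : ∑ j ∈ Finset.range ℓ, (X : ℚ[X]) ^ (ℓ + 1 + j) * (1 + X) ^ (2 * n + 1)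
        = X ^ ℓ * (1 + X) ^ (2 * n + 1) * ∑ j ∈ Finset.range ℓ, X ^ (j + 1) := by
      rw [Finset.mul_sum]
      exact Finset.sum_congr rfl fun j _ => by ring
    rw [e, map_natCast]
    linear_combination (X ^ ℓ * (1 + X) ^ (2 * n + 1)) * gS_closed (X : ℚ[X]) ℓ
  rw [key, coeff_sub, coeff_C_mul, finsetSum_coeff]
  simp only [coeff_shift, ch_succ]
  have e3 : ∑ j ∈ Finset.Icc (ℓ + 1) (2 * ℓ), ch (2 * n) ((n : ℤ) - j)
      = ∑ j ∈ Finset.range ℓ, ch (2 * n) ((n : ℤ) - ((ℓ + 1 + j : ℕ) : ℤ)) := by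
    rw [← Finset.Ico_add_one_right_eq_Icc, Finset.sum_Ico_eq_sum_range,
      show 2 * ℓ + 1 - (ℓ + 1) = ℓ by omega]
  have e4 := Finset.sum_range_sub (fun j : ℕ => ch (2 * n) ((n : ℤ) - ((ℓ + 1 + j : ℕ) : ℤ))) ℓ
  have e5 : ∀ j : ℕ, (n : ℤ) - ((ℓ + 1 + (j + 1) : ℕ) : ℤ) = (n : ℤ) - ((ℓ + 1 + j : ℕ) : ℤ) - 1 := by
    intro j; push_cast; ring
  simp only [e5, Finset.sum_sub_distrib] at e4
  rw [show (n : ℤ) - ((ℓ + 1 + ℓ : ℕ) : ℤ) = (n : ℤ) - 2 * ℓ - 1 by push_cast; ring,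
    show (n : ℤ) - ((ℓ + 1 + 0 : ℕ) : ℤ) = (n : ℤ) - ℓ - 1 by push_cast; ring] at e4
  rw [e3, Finset.sum_add_distrib]
  have e6 : ((Nat.choose (2 * n) (n - ℓ) : ℕ) : ℚ) = ch (2 * n) ((n : ℤ) - ℓ) := by
    rw [ch, if_pos (by omega), show ((n : ℤ) - ℓ).toNat = n - ℓ by omega]
  rw [e6]
  have e7 := ch_step (2 * n) ((n : ℤ) - ℓ)
  push_cast at e7
  have e8 : (n : ℚ) + ℓ + 1 ≠ 0 := by positivity
  have e9 : ch (2 * n) ((n : ℤ) - ℓ - 1) = ch (2 * n) ((n : ℤ) - ℓ) * (n - ℓ) / (n + ℓ + 1) := by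
    rw [eq_div_iff e8]; linear_combination e7
  have e10 : ((n : ℚ) * (2 * ℓ + 1) / (n + ℓ + 1)) * ch (2 * n) ((n : ℤ) - ℓ)
      = ℓ * (ch (2 * n) ((n : ℤ) - ℓ) + ch (2 * n) ((n : ℤ) - ℓ - 1))
        + ch (2 * n) ((n : ℤ) - ℓ - 1) := by
    rw [e9]; field_simp; ring
  rw [e10]
  linear_combination e4
end
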